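/- Let Φ = Φ_{0.99,5}, i.e., λ = 0.99 and μ = 5. There exist a natural number N and a nonempty compact set Λ ⊆ ℝ², invariant under H := Φ^(N+2) (the (N+2)-fold iterate of Φ), together with a homeomorphism e from Λ onto the space {0,1}^ℤ of doubly-infinite binary sequences (with the product topology) such that e ∘ (H restricted to Λ) = σ ∘ e, where σ : {0,1}^ℤ → {0,1}^ℤ is the shift map (σ(s))_n = s_{n+1}. Consequently, H restricted to Λ has a dense orbit and Φ has periodic points of arbitrarily large minimal period: for every m ∈ ℕ there exists a point p ∈ ℝ² and k ≥ m with Φ^k(p) = p and Φ^j(p) ≠ p for 0 < j < k. -/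

import Mathlib

noncomputable section

/-- The planar R-S flip-flop model map `Φ_{λ,μ}(x,y) = (1 − x(λ(1−x) + y), μy(x − y))`. -/
def Phi (l m : ℝ) (p : ℝ × ℝ) : ℝ × ℝ :=
  (1 - p.1 * (l * (1 - p.1) + p.2), m * p.2 * (p.1 - p.2))

/-- The shift map on the space {0,1}^ℤ of doubly-infinite binary sequences. -/
def shiftMap (s : ℤ → Bool) : ℤ → Bool := fun n => s (n + 1)


structure HNd where
  (cx cy t s ru rv : ℚ)

structure HQd where
  (e a b p q r : ℚ)

namespace Horse

def nd : Bool → ℕ → HNd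
  | false, 0 => ⟨0.6448, 0.6422, -0.75, 1, 0.00058, 0.0311⟩
  | false, 1 => ⟨0.3592, 0.0081, 0.07, -0.02, 0.00259, 0.0315⟩
  | false, 2 => ⟨0.7694, 0.0143, -0.22, -0.04, 0.00321, 0.011⟩
  | false, 3 => ⟨0.8133, 0.054, -0.24, -0.11, 0.011, 0.00634⟩
  | false, _ => ⟨0.8058, 0.2049, -0.27, -0.16, 0.0352, 0.0048⟩
  | true, 0 => ⟨0.6959, 0.5528, -0.47, 2.18, 0.00912, 0.0201⟩
  | true, 1 => ⟨0.4057, 0.3949, 0.19, 1, 0.0071, 0.0375⟩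
  | true, 2 => ⟨0.6011, 0.0214, 0.33, -0.05, 0.00814, 0.0379⟩
  | true, 3 => ⟨0.7499, 0.062, -0.19, -0.15, 0.0186, 0.0116⟩
  | true, _ => ⟨0.7678, 0.2126, -0.27, -0.24, 0.0486, 0.00779⟩

def ev (f : HQd) (w : ℝ × ℝ) : ℝ :=
  f.e + f.a * w.1 + f.b * w.2 + f.p * w.1 ^ 2 + f.q * (w.1 * w.2) + f.r * w.2 ^ 2

def chart (i : HNd) (w : ℝ × ℝ) : ℝ × ℝ :=
  (i.cx + i.t * i.ru * w.1 + i.rv * w.2, i.cy + i.ru * w.1 + i.s * i.rv * w.2)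

def FX (i : HNd) : HQd where
  e := 1 - i.cx * (99/100 * (1 - i.cx) + i.cy)
  a := ((-99/100 + 198/100 * i.cx - i.cy) * i.t - i.cx) * i.ru
  b := ((-99/100 + 198/100 * i.cx - i.cy) - i.cx * i.s) * i.rv
  p := (99/100 * i.t ^ 2 - i.t) * i.ru ^ 2
  q := (99/100 * (2 * i.t) - (1 + i.t * i.s)) * (i.ru * i.rv)
  r := (99/100 - i.s) * i.rv ^ 2

def FY (i : HNd) : HQd where
  e := 5 * i.cy * (i.cx - i.cy)
  a := (5 * i.cy * i.t + (5 * i.cx - 10 * i.cy)) * i.ru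
  b := (5 * i.cy + (5 * i.cx - 10 * i.cy) * i.s) * i.rv
  p := (5 * i.t - 5) * i.ru ^ 2
  q := (5 * (1 + i.t * i.s) - 10 * i.s) * (i.ru * i.rv)
  r := (5 * i.s - 5 * i.s ^ 2) * i.rv ^ 2

def GU (i j : HNd) : HQd where
  e := ((FY i).e - j.cy - j.s * ((FX i).e - j.cx)) / ((1 - j.t * j.s) * j.ru)
  a := ((FY i).a - j.s * (FX i).a) / ((1 - j.t * j.s) * j.ru)
  b := ((FY i).b - j.s * (FX i).b) / ((1 - j.t * j.s) * j.ru)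
  p := ((FY i).p - j.s * (FX i).p) / ((1 - j.t * j.s) * j.ru)
  q := ((FY i).q - j.s * (FX i).q) / ((1 - j.t * j.s) * j.ru)
  r := ((FY i).r - j.s * (FX i).r) / ((1 - j.t * j.s) * j.ru)

def GV (i j : HNd) : HQd where
  e := ((FX i).e - j.cx - j.t * ((FY i).e - j.cy)) / ((1 - j.t * j.s) * j.rv)
  a := ((FX i).a - j.t * (FY i).a) / ((1 - j.t * j.s) * j.rv)
  b := ((FX i).b - j.t * (FY i).b) / ((1 - j.t * j.s) * j.rv)
  p := ((FX i).p - j.t * (FY i).p) / ((1 - j.t * j.s) * j.rv)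
  q := ((FX i).q - j.t * (FY i).q) / ((1 - j.t * j.s) * j.rv)
  r := ((FX i).r - j.t * (FY i).r) / ((1 - j.t * j.s) * j.rv)

def EdgeOK (i j : HNd) : Prop :=
  (0 < 1 - j.t * j.s ∧ 0 < j.ru ∧ 0 < j.rv) ∧
  (|(GU i j).e| + |(GU i j).b| + |(GU i j).p| + |(GU i j).q| + |(GU i j).r| + 1 ≤ |(GU i j).a| ∧
   |(GU i j).b| + 2 * |(GU i j).p| + 2 * |(GU i j).q| + 2 * |(GU i j).r| + 1
     ≤ 999/1000 * |(GU i j).a|) ∧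
  (|(GV i j).e| + |(GV i j).a| + |(GV i j).b| + |(GV i j).p| + |(GV i j).q| + |(GV i j).r| ≤ 1 ∧
   |(GV i j).a| + |(GV i j).b| + 2 * |(GV i j).p| + 2 * |(GV i j).q| + 2 * |(GV i j).r|
     ≤ 999/1000)

instance (i j : HNd) : Decidable (EdgeOK i j) := by unfold EdgeOK; infer_instance

theorem edge0 : ∀ a, EdgeOK (nd a 0) (nd a 1) := by decide +kernel
theorem edge1 : ∀ a, EdgeOK (nd a 1) (nd a 2) := by decide +kernel
theorem edge2 : ∀ a, EdgeOK (nd a 2) (nd a 3) := by decide +kernel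
theorem edge3 : ∀ a, EdgeOK (nd a 3) (nd a 4) := by decide +kernel
theorem edge4 : ∀ a b, EdgeOK (nd a 4) (nd b 0) := by decide +kernel

theorem ev_FX (i : HNd) (w : ℝ × ℝ) : ev (FX i) w = (Phi 0.99 5 (chart i w)).1 := by
  simp only [ev, FX, Phi, chart]; push_cast; ring

theorem ev_FY (i : HNd) (w : ℝ × ℝ) : ev (FY i) w = (Phi 0.99 5 (chart i w)).2 := by
  simp only [ev, FY, Phi, chart]; push_cast; ring

theorem ev_GU (i j : HNd) (w : ℝ × ℝ) :
    ev (GU i j) w = (ev (FY i) w - j.cy - j.s * (ev (FX i) w - j.cx)) / ((1 - j.t * j.s) * j.ru) := by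
  simp only [ev, GU]; push_cast; ring

theorem ev_GV (i j : HNd) (w : ℝ × ℝ) :
    ev (GV i j) w = (ev (FX i) w - j.cx - j.t * (ev (FY i) w - j.cy)) / ((1 - j.t * j.s) * j.rv) := by
  simp only [ev, GV]; push_cast; ring

theorem chart_G {i j : HNd} (h : EdgeOK i j) (w : ℝ × ℝ) :
    chart j (ev (GU i j) w, ev (GV i j) w) = Phi 0.99 5 (chart i w) := by
  obtain ⟨⟨h1, h2, h3⟩, -⟩ := h
  have h1' : (0:ℝ) < 1 - j.t * j.s := by exact_mod_cast h1
  have h2' : (0:ℝ) < j.ru := by exact_mod_cast h2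
  have h3' : (0:ℝ) < j.rv := by exact_mod_cast h3
  have h1'' := h1'.ne'
  have h1c : (1:ℝ) - j.s * j.t ≠ 0 := by rw [mul_comm]; exact h1''
  have h2'' := h2'.ne'
  have h3'' := h3'.ne'
  ext
  · rw [← ev_FX, chart, ev_GU, ev_GV]
    generalize ev (FX i) w = X
    generalize ev (FY i) w = Y
    field_simp
    ring
  · rw [← ev_FY, chart, ev_GU, ev_GV]
    generalize ev (FX i) w = X
    generalize ev (FY i) w = Y
    field_simp
    ring

theorem ab_mul (c x d : ℝ) (h : |x| ≤ d) : |c * x| ≤ |c| * d := by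
  rw [abs_mul]; gcongr

theorem ev_bound (f : HQd) {w : ℝ × ℝ} (hw : ‖w‖ ≤ 1) :
    |ev f w| ≤ |(f.e:ℝ)| + |(f.a:ℝ)| + |(f.b:ℝ)| + |(f.p:ℝ)| + |(f.q:ℝ)| + |(f.r:ℝ)| := by
  have h1 : |w.1| ≤ 1 := (norm_fst_le w).trans hw
  have h2 : |w.2| ≤ 1 := (norm_snd_le w).trans hw
  have a1 := ab_mul f.a w.1 1 h1
  have a2 := ab_mul f.b w.2 1 h2
  have a3 := ab_mul f.p (w.1^2) 1 (by rw [abs_pow]; exact pow_le_one₀ (abs_nonneg _) h1)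
  have a4 := ab_mul f.q (w.1*w.2) 1 (by rw [abs_mul]; exact mul_le_one₀ h1 (abs_nonneg _) h2)
  have a5 := ab_mul f.r (w.2^2) 1 (by rw [abs_pow]; exact pow_le_one₀ (abs_nonneg _) h2)
  unfold ev
  rw [abs_le] at *
  have := neg_abs_le (f.e:ℝ)
  have := le_abs_self (f.e:ℝ)
  constructor <;> linarith

theorem ev_lip (f : HQd) {w z : ℝ × ℝ} (hw : ‖w‖ ≤ 1) (hz : ‖z‖ ≤ 1) {d : ℝ} (hd : dist w z ≤ d) :
    |ev f w - ev f z| ≤ (|(f.a:ℝ)| + |(f.b:ℝ)| + 2 * |(f.p:ℝ)| + 2 * |(f.q:ℝ)| + 2 * |(f.r:ℝ)|) * d := by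
  have h1 : |w.1| ≤ 1 := (norm_fst_le w).trans hw
  have h2 : |w.2| ≤ 1 := (norm_snd_le w).trans hw
  have k1 : |z.1| ≤ 1 := (norm_fst_le z).trans hz
  have k2 : |z.2| ≤ 1 := (norm_snd_le z).trans hz
  have hd0 : 0 ≤ d := dist_nonneg.trans hd
  have d1 : |w.1 - z.1| ≤ d := by
    refine le_trans ?_ hd
    rw [dist_eq_norm]; exact norm_fst_le (w - z)
  have d2 : |w.2 - z.2| ≤ d := by
    refine le_trans ?_ hd
    rw [dist_eq_norm]; exact norm_snd_le (w - z)
  have m1 : |w.1^2 - z.1^2| ≤ 2 * d := by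
    rw [show w.1^2 - z.1^2 = (w.1 + z.1) * (w.1 - z.1) by ring, abs_mul]
    exact mul_le_mul ((abs_add_le _ _).trans (by linarith)) d1 (abs_nonneg _) (by norm_num)
  have m2 : |w.2^2 - z.2^2| ≤ 2 * d := by
    rw [show w.2^2 - z.2^2 = (w.2 + z.2) * (w.2 - z.2) by ring, abs_mul]
    exact mul_le_mul ((abs_add_le _ _).trans (by linarith)) d2 (abs_nonneg _) (by norm_num)
  have m3 : |w.1*w.2 - z.1*z.2| ≤ 2 * d := by
    rw [show w.1*w.2 - z.1*z.2 = w.1 * (w.2 - z.2) + z.2 * (w.1 - z.1) by ring]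
    refine (abs_add_le _ _).trans ?_
    rw [abs_mul, abs_mul]
    have := mul_le_mul h1 d2 (abs_nonneg _) (by norm_num)
    have := mul_le_mul k2 d1 (abs_nonneg _) (by norm_num)
    linarith
  have a1 := ab_mul f.a _ _ d1
  have a2 := ab_mul f.b _ _ d2
  have a3 := ab_mul f.p _ _ m1
  have a4 := ab_mul f.q _ _ m3
  have a5 := ab_mul f.r _ _ m2
  unfold ev
  rw [abs_le] at *
  constructor <;> linarith

/-- one-node update -/
def updU (i j : HNd) (w w' : ℝ × ℝ) : ℝ := w.1 - (ev (GU i j) w - w'.1) / (GU i j).a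

def rem (f : HQd) : HQd := { f with a := 0 }

theorem updU_eq {i j : HNd} (ha : ((GU i j).a : ℝ) ≠ 0) (w w' : ℝ × ℝ) :
    updU i j w w' = (w'.1 - ev (rem (GU i j)) w) / (GU i j).a := by
  unfold updU ev rem
  field_simp
  push_cast
  ring

theorem edge_real {i j : HNd} (h : EdgeOK i j) :
  (|((GU i j).e:ℝ)| + |((GU i j).b:ℝ)| + |((GU i j).p:ℝ)| + |((GU i j).q:ℝ)| + |((GU i j).r:ℝ)| + 1 ≤ |((GU i j).a:ℝ)| ∧
   |((GU i j).b:ℝ)| + 2 * |((GU i j).p:ℝ)| + 2 * |((GU i j).q:ℝ)| + 2 * |((GU i j).r:ℝ)| + 1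
     ≤ 999/1000 * |((GU i j).a:ℝ)|) ∧
  (|((GV i j).e:ℝ)| + |((GV i j).a:ℝ)| + |((GV i j).b:ℝ)| + |((GV i j).p:ℝ)| + |((GV i j).q:ℝ)| + |((GV i j).r:ℝ)| ≤ 1 ∧
   |((GV i j).a:ℝ)| + |((GV i j).b:ℝ)| + 2 * |((GV i j).p:ℝ)| + 2 * |((GV i j).q:ℝ)| + 2 * |((GV i j).r:ℝ)|
     ≤ 999/1000) := by
  obtain ⟨-, ⟨h1, h2⟩, h3, h4⟩ := h
  have h1 := (Rat.cast_le (K := ℝ)).2 h1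
  have h2 := (Rat.cast_le (K := ℝ)).2 h2
  have h3 := (Rat.cast_le (K := ℝ)).2 h3
  have h4 := (Rat.cast_le (K := ℝ)).2 h4
  push_cast at h1 h2 h3 h4
  exact ⟨⟨h1, h2⟩, h3, h4⟩

theorem a_pos {i j : HNd} (h : EdgeOK i j) : 0 < |((GU i j).a:ℝ)| := by
  have := (edge_real h).1.1
  have := abs_nonneg ((GU i j).e:ℝ)
  have := abs_nonneg ((GU i j).b:ℝ)
  have := abs_nonneg ((GU i j).p:ℝ)
  have := abs_nonneg ((GU i j).q:ℝ)
  have := abs_nonneg ((GU i j).r:ℝ)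
  linarith

theorem updU_bound {i j : HNd} (h : EdgeOK i j) {w w' : ℝ × ℝ} (hw : ‖w‖ ≤ 1) (hw' : ‖w'‖ ≤ 1) :
    |updU i j w w'| ≤ 1 := by
  have hp := a_pos h
  rw [updU_eq (abs_pos.1 hp), abs_div, div_le_one hp]
  have h1 := (edge_real h).1.1
  have h2 := ev_bound (rem (GU i j)) hw
  have h3 : |w'.1| ≤ 1 := (norm_fst_le w').trans hw'
  simp only [rem, Rat.cast_zero, abs_zero] at h2
  refine (abs_sub _ _).trans ?_
  simp only [rem]
  linarith

theorem updU_lip {i j : HNd} (h : EdgeOK i j) {w w' z z' : ℝ × ℝ} (hw : ‖w‖ ≤ 1)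
    (hz : ‖z‖ ≤ 1) {d : ℝ} (hd : dist w z ≤ d) (hd' : dist w' z' ≤ d) :
    |updU i j w w' - updU i j z z'| ≤ 999/1000 * d := by
  have hp := a_pos h
  have hd0 : 0 ≤ d := dist_nonneg.trans hd
  rw [updU_eq (abs_pos.1 hp), updU_eq (abs_pos.1 hp), ← sub_div, abs_div, div_le_iff₀ hp]
  have h1 := mul_le_mul_of_nonneg_right (edge_real h).1.2 hd0
  have h2 := ev_lip (rem (GU i j)) hw hz hd
  have h3 : |w'.1 - z'.1| ≤ d := by
    refine le_trans ?_ hd'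
    rw [dist_eq_norm]; exact norm_fst_le (w' - z')
  rw [show w'.1 - ev (rem (GU i j)) w - (z'.1 - ev (rem (GU i j)) z)
    = (w'.1 - z'.1) - (ev (rem (GU i j)) w - ev (rem (GU i j)) z) by ring]
  refine (abs_sub _ _).trans ?_
  simp only [rem, Rat.cast_zero, abs_zero] at h2 ⊢
  nlinarith

/-- the shadowing operator -/
def T (ν : ℤ → HNd) (w : ℤ → ℝ × ℝ) : ℤ → ℝ × ℝ := fun n =>
  (updU (ν n) (ν (n + 1)) (w n) (w (n + 1)), ev (GV (ν (n - 1)) (ν n)) (w (n - 1)))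

def Path (ν : ℤ → HNd) : Prop := ∀ n, EdgeOK (ν n) (ν (n + 1))

theorem Path.pred {ν : ℤ → HNd} (h : Path ν) (n : ℤ) : EdgeOK (ν (n - 1)) (ν n) := by
  have := h (n - 1)
  rwa [sub_add_cancel] at this

theorem T_bound {ν : ℤ → HNd} (h : Path ν) {w : ℤ → ℝ × ℝ} (hw : ∀ n, ‖w n‖ ≤ 1) (n : ℤ) :
    ‖T ν w n‖ ≤ 1 := by
  rw [Prod.norm_def, max_le_iff]
  exact ⟨updU_bound (h n) (hw n) (hw (n + 1)),
    (ev_bound _ (hw (n - 1))).trans (edge_real (h.pred n)).2.1⟩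

theorem T_lip {ν : ℤ → HNd} (h : Path ν) {w z : ℤ → ℝ × ℝ} (hw : ∀ n, ‖w n‖ ≤ 1)
    (hz : ∀ n, ‖z n‖ ≤ 1) {d : ℝ} (hd : ∀ n, dist (w n) (z n) ≤ d) (n : ℤ) :
    dist (T ν w n) (T ν z n) ≤ 999/1000 * d := by
  rw [Prod.dist_eq, max_le_iff]
  refine ⟨updU_lip (h n) (hw n) (hz n) (hd n) (hd (n + 1)), ?_⟩
  refine (ev_lip _ (hw (n - 1)) (hz (n - 1)) (hd (n - 1))).trans ?_
  exact mul_le_mul_of_nonneg_right (edge_real (h.pred n)).2.2 (dist_nonneg.trans (hd n))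

def it (ν : ℤ → HNd) : ℕ → ℤ → ℝ × ℝ
  | 0 => fun _ => 0
  | k + 1 => T ν (it ν k)

theorem it_bound {ν : ℤ → HNd} (h : Path ν) (k : ℕ) (n : ℤ) : ‖it ν k n‖ ≤ 1 := by
  induction k generalizing n with
  | zero => simp [it]
  | succ k ih => exact T_bound h ih n

theorem it_dist {ν : ℤ → HNd} (h : Path ν) (k : ℕ) (n : ℤ) :
    dist (it ν k n) (it ν (k + 1) n) ≤ 1 * (999/1000) ^ k := by
  induction k generalizing n with
  | zero => simpa [it] using it_bound h 1 n
  | succ k ih =>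
    have := T_lip h (it_bound h k) (it_bound h (k + 1)) ih n
    rw [pow_succ]
    refine this.trans (le_of_eq (by ring))

theorem it_cauchy {ν : ℤ → HNd} (h : Path ν) (n : ℤ) : CauchySeq (fun k => it ν k n) :=
  cauchySeq_of_le_geometric (999/1000) 1 (by norm_num) (fun k => it_dist h k n)

def fx (ν : ℤ → HNd) (n : ℤ) : ℝ × ℝ := Filter.atTop.limUnder (fun k => it ν k n)

theorem it_tendsto {ν : ℤ → HNd} (h : Path ν) (n : ℤ) :
    Filter.Tendsto (fun k => it ν k n) Filter.atTop (nhds (fx ν n)) :=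
  (it_cauchy h n).tendsto_limUnder

theorem fx_bound {ν : ℤ → HNd} (h : Path ν) (n : ℤ) : ‖fx ν n‖ ≤ 1 :=
  le_of_tendsto (it_tendsto h n).norm (Filter.Eventually.of_forall fun k => it_bound h k n)

theorem fx_dist {ν : ℤ → HNd} (h : Path ν) (k : ℕ) (n : ℤ) :
    dist (it ν k n) (fx ν n) ≤ 1 * (999/1000) ^ k / (1 - 999/1000) :=
  dist_le_of_le_geometric_of_tendsto (999/1000) 1 (by norm_num) (fun k => it_dist h k n)
    (it_tendsto h n) k

theorem ev_cont (f : HQd) : Continuous (ev f) := by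
  unfold ev; fun_prop

theorem fx_fixed {ν : ℤ → HNd} (h : Path ν) (n : ℤ) : T ν (fx ν) n = fx ν n := by
  have h1 : Filter.Tendsto (fun k => it ν (k + 1) n) Filter.atTop (nhds (fx ν n)) :=
    (it_tendsto h n).comp (Filter.tendsto_add_atTop_nat 1)
  refine tendsto_nhds_unique ?_ h1
  have ta := it_tendsto h n
  have tb := it_tendsto h (n + 1)
  have tc := it_tendsto h (n - 1)
  have e1 := ((ev_cont (GU (ν n) (ν (n + 1)))).tendsto _).comp ta
  have e2 := ((ev_cont (GV (ν (n - 1)) (ν n))).tendsto _).comp tc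
  have ta1 := (continuous_fst.tendsto _).comp ta
  have tb1 := (continuous_fst.tendsto _).comp tb
  exact (ta1.sub ((e1.sub tb1).div_const _)).prodMk_nhds e2

theorem orbit {ν : ℤ → HNd} (h : Path ν) (n : ℤ) :
    Phi 0.99 5 (chart (ν n) (fx ν n)) = chart (ν (n + 1)) (fx ν (n + 1)) := by
  rw [← chart_G (h n)]
  congr 1
  ext
  · have h1 := congrArg Prod.fst (fx_fixed h n)
    simp only [T, updU] at h1
    have h2 : (ev (GU (ν n) (ν (n + 1))) (fx ν n) - (fx ν (n + 1)).1) / ((GU (ν n) (ν (n + 1))).a : ℝ) = 0 := by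
      linarith
    rcases div_eq_zero_iff.1 h2 with h3 | h3
    · simpa using sub_eq_zero.1 h3
    · exact absurd h3 (abs_pos.1 (a_pos (h n)))
  · have h1 := congrArg Prod.snd (fx_fixed h (n + 1))
    simp only [T, add_sub_cancel_right] at h1
    exact h1

theorem it_shift (ν : ℤ → HNd) (m : ℤ) (k : ℕ) (n : ℤ) :
    it (fun n => ν (n + m)) k n = it ν k (n + m) := by
  induction k generalizing n with
  | zero => rfl
  | succ k ih =>
    simp only [it, T, ih]
    rw [show n + 1 + m = n + m + 1 by ring, show n - 1 + m = n + m - 1 by ring]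

theorem fx_shift (ν : ℤ → HNd) (m : ℤ) (n : ℤ) :
    fx (fun n => ν (n + m)) n = fx ν (n + m) := by
  unfold fx
  simp only [it_shift]

/-- symbolic part -/
def nu (s : ℤ → Bool) (n : ℤ) : HNd := nd (s (n / 5)) (n % 5).toNat

theorem nu_at (s : ℤ → Bool) (q : ℤ) (r : ℕ) (hr : r < 5) : nu s (5 * q + r) = nd (s q) r := by
  unfold nu
  rw [show (5 * q + (r:ℤ)) / 5 = q by omega, show ((5 * q + (r:ℤ)) % 5).toNat = r by omega]

theorem nu_path (s : ℤ → Bool) : Path (nu s) := by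
  intro n
  obtain ⟨q, r, hr, rfl⟩ : ∃ q : ℤ, ∃ r : ℕ, r < 5 ∧ n = 5 * q + r :=
    ⟨n / 5, (n % 5).toNat, by omega, by omega⟩
  rw [nu_at s q r hr]
  by_cases h4 : r = 4
  · subst h4
    have := nu_at s (q + 1) 0 (by norm_num)
    rw [show 5 * q + ((4:ℕ):ℤ) + 1 = 5 * (q + 1) + ((0:ℕ):ℤ) by push_cast; ring, this]
    exact edge4 _ _
  · have := nu_at s q (r + 1) (by omega)
    rw [show 5 * q + (r:ℤ) + 1 = 5 * q + ((r + 1 : ℕ):ℤ) by push_cast; ring, this]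
    interval_cases r
    · exact edge0 _
    · exact edge1 _
    · exact edge2 _
    · exact edge3 _
    · exact absurd rfl h4

def P (s : ℤ → Bool) (n : ℤ) : ℝ × ℝ := chart (nu s n) (fx (nu s) n)

theorem P_succ (s : ℤ → Bool) (n : ℤ) : Phi 0.99 5 (P s n) = P s (n + 1) := orbit (nu_path s) n

theorem P_shift (s : ℤ → Bool) (n : ℤ) : P (shiftMap s) n = P s (n + 5) := by
  have h : nu (shiftMap s) = fun n => nu s (n + 5) := by
    funext n
    unfold nu shiftMap
    rw [show (n + 5) / 5 = n / 5 + 1 by omega, show (n + 5) % 5 = n % 5 by omega]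
  unfold P
  rw [h, fx_shift]

theorem P_iter (s : ℤ → Bool) (n : ℤ) (k : ℕ) : (Phi 0.99 5)^[k] (P s n) = P s (n + k) := by
  induction k with
  | zero => simp
  | succ k ih => rw [Function.iterate_succ_apply', ih, P_succ]; push_cast; ring_nf

theorem it_cont (k : ℕ) (n : ℤ) : Continuous (fun s : ℤ → Bool => it (nu s) k n) := by
  have hs : ∀ q : ℤ, Continuous (fun s : ℤ → Bool => s q) := fun q => continuous_apply q
  have hnd : ∀ (m : ℤ), ∃ q : ℤ, ∃ r : ℕ, ∀ s : ℤ → Bool, nu s m = nd (s q) r :=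
    fun m => ⟨m / 5, (m % 5).toNat, fun s => rfl⟩
  induction k generalizing n with
  | zero => exact continuous_const
  | succ k ih =>
    obtain ⟨q0, r0, h0⟩ := hnd n
    obtain ⟨q1, r1, h1⟩ := hnd (n + 1)
    obtain ⟨q2, r2, h2⟩ := hnd (n - 1)
    simp only [it, T, updU, h0, h1, h2]
    have key : ∀ (g : Bool × Bool → ℝ) (a b : ℤ), Continuous (fun s : ℤ → Bool => g (s a, s b)) :=
      fun g a b => (continuous_of_discreteTopology (f := g)).comp ((hs a).prodMk (hs b))
    have evc : ∀ (f : Bool × Bool → HQd) (a b m : ℤ),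
        Continuous (fun s : ℤ → Bool => ev (f (s a, s b)) (it (nu s) k m)) := by
      intro f a b m
      have := ih m
      have c1 := key (fun x => ((f x).e : ℝ)) a b
      have c2 := key (fun x => ((f x).a : ℝ)) a b
      have c3 := key (fun x => ((f x).b : ℝ)) a b
      have c4 := key (fun x => ((f x).p : ℝ)) a b
      have c5 := key (fun x => ((f x).q : ℝ)) a b
      have c6 := key (fun x => ((f x).r : ℝ)) a b
      unfold ev
      fun_prop
    have e1 := evc (fun x => GU (nd x.1 r0) (nd x.2 r1)) q0 q1 n
    have e2 := evc (fun x => GV (nd x.1 r2) (nd x.2 r0)) q2 q0 (n - 1)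
    have e3 := key (fun x => (((GU (nd x.1 r0) (nd x.2 r1)).a : ℝ))⁻¹) q0 q1
    have i1 := (ih n).fst
    have i2 := (ih (n + 1)).fst
    simp only [div_eq_mul_inv]
    exact (i1.sub ((e1.sub i2).mul e3)).prodMk e2

theorem fx_cont (n : ℤ) : Continuous (fun s : ℤ → Bool => fx (nu s) n) := by
  have hu : TendstoUniformly (fun k (s : ℤ → Bool) => it (nu s) k n) (fun s => fx (nu s) n)
      Filter.atTop := by
    rw [Metric.tendstoUniformly_iff]
    intro ε hε
    have ht : Filter.Tendsto (fun k : ℕ => 1 * (999/1000:ℝ) ^ k / (1 - 999/1000)) Filter.atTop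
        (nhds (1 * 0 / (1 - 999/1000))) :=
      ((tendsto_pow_atTop_nhds_zero_of_lt_one (by norm_num) (by norm_num)).const_mul 1).div_const _
    have := ht.eventually (gt_mem_nhds (show 1 * 0 / (1 - 999/1000) < ε by simpa using hε))
    filter_upwards [this] with k hk s
    rw [dist_comm]
    exact (fx_dist (nu_path s) k n).trans_lt hk
  exact hu.continuous (Filter.Eventually.of_forall fun k => it_cont k n).frequently

theorem P_cont (n : ℤ) : Continuous (fun s : ℤ → Bool => P s n) := by
  have h := fx_cont n
  have key : ∀ (g : Bool → ℝ), Continuous (fun s : ℤ → Bool => g (s (n / 5))) :=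
    fun g => (continuous_of_discreteTopology (f := g)).comp (continuous_apply _)
  have c1 := key (fun x => ((nd x (n % 5).toNat).cx : ℝ))
  have c2 := key (fun x => ((nd x (n % 5).toNat).cy : ℝ))
  have c3 := key (fun x => ((nd x (n % 5).toNat).t : ℝ))
  have c4 := key (fun x => ((nd x (n % 5).toNat).s : ℝ))
  have c5 := key (fun x => ((nd x (n % 5).toNat).ru : ℝ))
  have c6 := key (fun x => ((nd x (n % 5).toNat).rv : ℝ))
  have h1 := h.fst
  have h2 := h.snd
  have : (fun s : ℤ → Bool => P s n) = fun s =>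
    chart (nd (s (n / 5)) (n % 5).toNat) (fx (nu s) n) := rfl
  rw [this]
  unfold chart
  fun_prop

/-- injectivity via the midpoint Jacobian -/
theorem Phi_inj {p q : ℝ × ℝ} (h : Phi 0.99 5 p = Phi 0.99 5 q)
    (hd : 1.98 * ((p.1 + q.1) / 2) ^ 2 - 0.99 * ((p.1 + q.1) / 2)
      - 3.96 * ((p.1 + q.1) / 2) * ((p.2 + q.2) / 2) + 1.98 * ((p.2 + q.2) / 2)
      + 2 * ((p.2 + q.2) / 2) ^ 2 ≠ 0) : p = q := by
  obtain ⟨x, y⟩ := p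
  obtain ⟨x', y'⟩ := q
  simp only [Phi, Prod.mk.injEq] at h hd
  obtain ⟨h1, h2⟩ := h
  set m := (x + x') / 2 with hm
  set k := (y + y') / 2 with hk
  have e1 : (-0.99 + 1.98 * m - k) * (x - x') - m * (y - y') = 0 := by
    rw [hm, hk]; linear_combination h1
  have e2 : k * (x - x') + (m - 2 * k) * (y - y') = 0 := by
    rw [hm, hk]; linear_combination h2 / 5
  have f1 : (1.98 * m ^ 2 - 0.99 * m - 3.96 * m * k + 1.98 * k + 2 * k ^ 2) * (x - x') = 0 := by
    linear_combination (m - 2 * k) * e1 + m * e2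
  have f2 : (1.98 * m ^ 2 - 0.99 * m - 3.96 * m * k + 1.98 * k + 2 * k ^ 2) * (y - y') = 0 := by
    linear_combination (-k) * e1 + (-0.99 + 1.98 * m - k) * e2
  have g1 := (mul_eq_zero.1 f1).resolve_left hd
  have g2 := (mul_eq_zero.1 f2).resolve_left hd
  ext
  · exact sub_eq_zero.1 g1
  · exact sub_eq_zero.1 g2

def rect (a : Bool) (r : ℕ) (p : ℝ × ℝ) : Prop :=
  ∃ w : ℝ × ℝ, ‖w‖ ≤ 1 ∧ p = chart (nd a r) w

theorem P_rect (s : ℤ → Bool) (q : ℤ) (r : ℕ) (hr : r < 5) : rect (s q) r (P s (5 * q + r)) :=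
  ⟨_, fx_bound (nu_path s) _, by rw [P, nu_at s q r hr]⟩

theorem nrm {w : ℝ × ℝ} (hw : ‖w‖ ≤ 1) : -1 ≤ w.1 ∧ w.1 ≤ 1 ∧ -1 ≤ w.2 ∧ w.2 ≤ 1 := by
  have h1 : |w.1| ≤ 1 := (norm_fst_le w).trans hw
  have h2 : |w.2| ≤ 1 := (norm_snd_le w).trans hw
  rw [abs_le] at h1 h2
  exact ⟨h1.1, h1.2, h2.1, h2.2⟩

theorem box4 {a : Bool} {p : ℝ × ℝ} (h : rect a 4 p) :
    0.74 ≤ p.1 ∧ p.1 ≤ 0.83 ∧ 0.16 ≤ p.2 ∧ p.2 ≤ 0.27 := by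
  obtain ⟨w, hw, rfl⟩ := h
  obtain ⟨h1, h2, h3, h4⟩ := nrm hw
  cases a <;> simp only [chart, nd] <;> push_cast <;> refine ⟨?_, ?_, ?_, ?_⟩ <;> linarith

theorem box3 {a : Bool} {p : ℝ × ℝ} (h : rect a 3 p) :
    0.73 ≤ p.1 ∧ p.1 ≤ 0.83 ∧ 0.04 ≤ p.2 ∧ p.2 ≤ 0.09 := by
  obtain ⟨w, hw, rfl⟩ := h
  obtain ⟨h1, h2, h3, h4⟩ := nrm hw
  cases a <;> simp only [chart, nd] <;> push_cast <;> refine ⟨?_, ?_, ?_, ?_⟩ <;> linarith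

theorem box2 {a : Bool} {p : ℝ × ℝ} (h : rect a 2 p) :
    0.56 ≤ p.1 ∧ p.1 ≤ 0.79 ∧ 0.01 ≤ p.2 ∧ p.2 ≤ 0.04 := by
  obtain ⟨w, hw, rfl⟩ := h
  obtain ⟨h1, h2, h3, h4⟩ := nrm hw
  cases a <;> simp only [chart, nd] <;> push_cast <;> refine ⟨?_, ?_, ?_, ?_⟩ <;> linarith

theorem box2f {p : ℝ × ℝ} (h : rect false 2 p) : 0.7 ≤ p.1 := by
  obtain ⟨w, hw, rfl⟩ := h
  obtain ⟨h1, h2, h3, h4⟩ := nrm hw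
  simp only [chart, nd]; push_cast; linarith

theorem box2t {p : ℝ × ℝ} (h : rect true 2 p) : p.1 ≤ 0.65 := by
  obtain ⟨w, hw, rfl⟩ := h
  obtain ⟨h1, h2, h3, h4⟩ := nrm hw
  simp only [chart, nd]; push_cast; linarith

theorem box1f {p : ℝ × ℝ} (h : rect false 1 p) :
    0.32 ≤ p.1 ∧ p.1 ≤ 0.4 ∧ 0 ≤ p.2 ∧ p.2 ≤ 0.02 := by
  obtain ⟨w, hw, rfl⟩ := h
  obtain ⟨h1, h2, h3, h4⟩ := nrm hw
  simp only [chart, nd] ; push_cast ; refine ⟨?_, ?_, ?_, ?_⟩ <;> linarith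

theorem box1t {p : ℝ × ℝ} (h : rect true 1 p) :
    0.36 ≤ p.1 ∧ p.1 ≤ 0.45 ∧ 0.35 ≤ p.2 ∧ p.2 ≤ 0.44 := by
  obtain ⟨w, hw, rfl⟩ := h
  obtain ⟨h1, h2, h3, h4⟩ := nrm hw
  simp only [chart, nd] ; push_cast ; refine ⟨?_, ?_, ?_, ?_⟩ <;> linarith

theorem box0f {p : ℝ × ℝ} (h : rect false 0 p) :
    0.61 ≤ p.1 ∧ p.1 ≤ 0.68 ∧ 0.61 ≤ p.2 ∧ p.2 ≤ 0.68 := by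
  obtain ⟨w, hw, rfl⟩ := h
  obtain ⟨h1, h2, h3, h4⟩ := nrm hw
  simp only [chart, nd] ; push_cast ; refine ⟨?_, ?_, ?_, ?_⟩ <;> linarith

theorem box0t {p : ℝ × ℝ} (h : rect true 0 p) :
    0.67 ≤ p.1 ∧ p.1 ≤ 0.73 ∧ 0.49 ≤ p.2 ∧ p.2 ≤ 0.61 := by
  obtain ⟨w, hw, rfl⟩ := h
  obtain ⟨h1, h2, h3, h4⟩ := nrm hw
  simp only [chart, nd] ; push_cast ; refine ⟨?_, ?_, ?_, ?_⟩ <;> linarith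

theorem mid {a b lo hi : ℝ} (h1 : lo ≤ a) (h2 : a ≤ hi) (h3 : lo ≤ b) (h4 : b ≤ hi) :
    lo ≤ (a + b) / 2 ∧ (a + b) / 2 ≤ hi := ⟨by linarith, by linarith⟩

theorem inj_box {p q : ℝ × ℝ} (lx ux ly uy : ℝ)
    (hp : lx ≤ p.1 ∧ p.1 ≤ ux ∧ ly ≤ p.2 ∧ p.2 ≤ uy)
    (hq : lx ≤ q.1 ∧ q.1 ≤ ux ∧ ly ≤ q.2 ∧ q.2 ≤ uy)
    (hd : ∀ x y : ℝ, lx ≤ x → x ≤ ux → ly ≤ y → y ≤ uy →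
      1.98 * x ^ 2 - 0.99 * x - 3.96 * x * y + 1.98 * y + 2 * y ^ 2 ≠ 0)
    (h : Phi 0.99 5 p = Phi 0.99 5 q) : p = q := by
  obtain ⟨a1, a2, a3, a4⟩ := hp
  obtain ⟨b1, b2, b3, b4⟩ := hq
  exact Phi_inj h (hd _ _ (mid a1 a2 b1 b2).1 (mid a1 a2 b1 b2).2 (mid a3 a4 b3 b4).1
    (mid a3 a4 b3 b4).2)

theorem inj4 {a b : Bool} {p q : ℝ × ℝ} (hp : rect a 4 p) (hq : rect b 4 q)
    (h : Phi 0.99 5 p = Phi 0.99 5 q) : p = q := by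
  refine inj_box _ _ _ _ (box4 hp) (box4 hq) (fun x y h1 h2 h3 h4 => ?_) h
  apply ne_of_gt
  nlinarith [mul_nonneg (sub_nonneg.2 h1) (sub_nonneg.2 h3), mul_nonneg (sub_nonneg.2 h1) (sub_nonneg.2 h4), sq_nonneg (x - 0.78), sq_nonneg (y - 0.2)]

theorem inj3 {a b : Bool} {p q : ℝ × ℝ} (hp : rect a 3 p) (hq : rect b 3 q)
    (h : Phi 0.99 5 p = Phi 0.99 5 q) : p = q := by
  refine inj_box _ _ _ _ (box3 hp) (box3 hq) (fun x y h1 h2 h3 h4 => ?_) h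
  apply ne_of_gt
  nlinarith [mul_nonneg (sub_nonneg.2 h1) (sub_nonneg.2 h3), mul_nonneg (sub_nonneg.2 h1) (sub_nonneg.2 h4), sq_nonneg (x - 0.78), sq_nonneg (y - 0.06)]

theorem inj2 {a b : Bool} {p q : ℝ × ℝ} (hp : rect a 2 p) (hq : rect b 2 q)
    (h : Phi 0.99 5 p = Phi 0.99 5 q) : p = q := by
  refine inj_box _ _ _ _ (box2 hp) (box2 hq) (fun x y h1 h2 h3 h4 => ?_) h
  apply ne_of_gt
  nlinarith [mul_nonneg (sub_nonneg.2 h1) (sub_nonneg.2 h3), mul_nonneg (sub_nonneg.2 h1) (sub_nonneg.2 h4), sq_nonneg (x - 0.56), sq_nonneg (y - 0.02)]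

theorem inj1 {a : Bool} {p q : ℝ × ℝ} (hp : rect a 1 p) (hq : rect a 1 q)
    (h : Phi 0.99 5 p = Phi 0.99 5 q) : p = q := by
  cases a
  · refine inj_box _ _ _ _ (box1f hp) (box1f hq) (fun x y h1 h2 h3 h4 => ?_) h
    apply ne_of_lt
    nlinarith [mul_nonneg (sub_nonneg.2 h1) (sub_nonneg.2 h2), mul_nonneg (sub_nonneg.2 h1) (sub_nonneg.2 h3), mul_nonneg (sub_nonneg.2 h3) (sub_nonneg.2 h4)]
  · refine inj_box _ _ _ _ (box1t hp) (box1t hq) (fun x y h1 h2 h3 h4 => ?_) h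
    apply ne_of_gt
    nlinarith [mul_nonneg (sub_nonneg.2 h2) (sub_nonneg.2 h3), mul_nonneg (sub_nonneg.2 h1) (sub_nonneg.2 h4), sq_nonneg (x - 0.4), sq_nonneg (y - 0.4)]

theorem inj0 {a : Bool} {p q : ℝ × ℝ} (hp : rect a 0 p) (hq : rect a 0 q)
    (h : Phi 0.99 5 p = Phi 0.99 5 q) : p = q := by
  cases a
  · refine inj_box _ _ _ _ (box0f hp) (box0f hq) (fun x y h1 h2 h3 h4 => ?_) h
    apply ne_of_gt
    nlinarith [mul_nonneg (sub_nonneg.2 h2) (sub_nonneg.2 h3), mul_nonneg (sub_nonneg.2 h1) (sub_nonneg.2 h4), sq_nonneg (x - 0.64), sq_nonneg (y - 0.64)]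
  · refine inj_box _ _ _ _ (box0t hp) (box0t hq) (fun x y h1 h2 h3 h4 => ?_) h
    apply ne_of_gt
    nlinarith [mul_nonneg (sub_nonneg.2 h2) (sub_nonneg.2 h3), mul_nonneg (sub_nonneg.2 h1) (sub_nonneg.2 h4), sq_nonneg (x - 0.7), sq_nonneg (y - 0.55)]

theorem sep2 {a b : Bool} {p : ℝ × ℝ} (hp : rect a 2 p) (hq : rect b 2 p) : a = b := by
  cases a <;> cases b
  · rfl
  · have := box2f hp; have := box2t hq; linarith
  · have := box2t hp; have := box2f hq; linarith
  · rfl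

theorem back (s t : ℤ → Bool) (q : ℤ) (h : P s (5 * (q + 1)) = P t (5 * (q + 1))) :
    s q = t q ∧ P s (5 * q) = P t (5 * q) := by
  have step : ∀ u : ℤ → Bool, ∀ r : ℕ,
      Phi 0.99 5 (P u (5 * q + r)) = P u (5 * q + (r + 1 : ℕ)) := by
    intro u r
    rw [P_succ]; push_cast; ring_nf
  have e5 : P s (5 * q + (5:ℕ)) = P t (5 * q + (5:ℕ)) := by
    have : 5 * q + ((5:ℕ):ℤ) = 5 * (q + 1) := by push_cast; ring
    rw [this, h]
  have e4 := inj4 (P_rect s q 4 (by norm_num)) (P_rect t q 4 (by norm_num))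
    (by rw [step, step, e5])
  have e3 := inj3 (P_rect s q 3 (by norm_num)) (P_rect t q 3 (by norm_num))
    (by rw [step, step, e4])
  have e2 := inj2 (P_rect s q 2 (by norm_num)) (P_rect t q 2 (by norm_num))
    (by rw [step, step, e3])
  have hs : s q = t q := by
    refine sep2 (P_rect s q 2 (by norm_num)) ?_
    rw [e2]; exact P_rect t q 2 (by norm_num)
  have r1 := P_rect s q 1 (by norm_num)
  have r0 := P_rect s q 0 (by norm_num)
  rw [hs] at r0 r1
  have e1 := inj1 r1 (P_rect t q 1 (by norm_num)) (by rw [step, step, e2])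
  have e0 := inj0 r0 (P_rect t q 0 (by norm_num)) (by rw [step, step, e1])
  refine ⟨hs, ?_⟩
  simpa using e0

def pt (s : ℤ → Bool) : ℝ × ℝ := P s 0

theorem pt_inj : Function.Injective pt := by
  intro s t h
  have hneg : ∀ k : ℕ, P s (5 * (-(k:ℤ))) = P t (5 * (-(k:ℤ))) := by
    intro k
    induction k with
    | zero => simpa [pt] using h
    | succ k ih =>
      refine (back s t _ ?_).2
      rw [show -((k + 1 : ℕ) : ℤ) + 1 = -(k:ℤ) by push_cast; ring]
      exact ih
  funext q
  rcases lt_or_ge q 0 with hq | hq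
  · obtain ⟨k, rfl⟩ : ∃ k : ℕ, q = -((k:ℤ)) - 1 := ⟨(-q - 1).toNat, by omega⟩
    refine (back s t _ ?_).1
    rw [sub_add_cancel]
    exact hneg k
  · obtain ⟨k, rfl⟩ := Int.eq_ofNat_of_zero_le hq
    have e : P s (5 * (k:ℤ) + (2:ℕ)) = P t (5 * (k:ℤ) + (2:ℕ)) := by
      have h1 := P_iter s 0 (5 * k + 2)
      have h2 := P_iter t 0 (5 * k + 2)
      have h' : P s 0 = P t 0 := h
      rw [h', h2] at h1
      push_cast at h1 ⊢
      rw [zero_add] at h1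
      exact h1.symm
    refine sep2 (P_rect s k 2 (by norm_num)) ?_
    rw [e]; exact P_rect t k 2 (by norm_num)

theorem pt_cont : Continuous pt := P_cont 0

theorem pt_shift (s : ℤ → Bool) : (Phi 0.99 5)^[3 + 2] (pt s) = pt (shiftMap s) := by
  unfold pt
  rw [P_iter, P_shift]; norm_num

theorem shift_iter (s : ℤ → Bool) (k : ℕ) : shiftMap^[k] s = fun n => s (n + k) := by
  induction k with
  | zero => simp
  | succ k ih =>
    rw [Function.iterate_succ_apply', ih]
    funext n
    simp only [shiftMap]
    congr 1; push_cast; ring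

theorem pt_shift_iter (s : ℤ → Bool) (k : ℕ) :
    ((Phi 0.99 5)^[3 + 2])^[k] (pt s) = pt (shiftMap^[k] s) := by
  induction k with
  | zero => rfl
  | succ k ih => rw [Function.iterate_succ_apply', ih, pt_shift, ← Function.iterate_succ_apply' shiftMap]

/-- a sequence with dense forward orbit -/
def uni (n : ℤ) : Bool :=
  Nat.testBit (Nat.unpair (Nat.sqrt n.toNat)).1 (n.toNat - Nat.sqrt n.toNat * Nat.sqrt n.toNat)

theorem bits (f : ℕ → Bool) (m : ℕ) : ∃ c : ℕ, ∀ i < m, Nat.testBit c i = f i :=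
  ⟨Nat.ofBits (fun i : Fin m => f i), fun i hi => by
    rw [Nat.testBit_ofBits_lt _ _ hi]⟩

theorem uni_dense (t : ℤ → Bool) (m : ℕ) :
    ∃ n : ℕ, ∀ j : ℤ, -m ≤ j → j ≤ m → shiftMap^[n] uni j = t j := by
  obtain ⟨c, hc⟩ := bits (fun i => t ((i:ℤ) - m)) (2 * m + 1)
  set k := Nat.pair c m with hk
  have hkm : m ≤ k := Nat.right_le_pair c m
  refine ⟨k * k + m, fun j h1 h2 => ?_⟩
  obtain ⟨i, hi⟩ : ∃ i : ℕ, j = (i:ℤ) - m := ⟨(j + m).toNat, by omega⟩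
  have hi2 : i ≤ 2 * m := by omega
  subst hi
  rw [shift_iter]
  have e : ((i:ℤ) - m + ((k * k + m : ℕ):ℤ)).toNat = k * k + i := by
    push_cast
    rw [show (i:ℤ) - m + ((k:ℤ) * k + m) = ((k * k + i : ℕ) : ℤ) by push_cast; ring]
    exact Int.toNat_natCast _
  simp only [uni, e]
  rw [Nat.sqrt_add_eq k (by omega), hk, Nat.unpair_pair, ← hk, Nat.add_sub_cancel_left]
  exact hc i (by omega)

theorem dense_orbit (t : ℤ → Bool) (ε : ℝ) (hε : 0 < ε) :
    ∃ n : ℕ, dist (((Phi 0.99 5)^[3 + 2])^[n] (pt uni)) (pt t) < ε := by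
  choose n hn using uni_dense t
  have h1 : Filter.Tendsto (fun m => shiftMap^[n m] uni) Filter.atTop (nhds t) := by
    rw [tendsto_pi_nhds]
    intro j
    refine tendsto_const_nhds.congr' ?_
    filter_upwards [Filter.eventually_ge_atTop j.natAbs] with m hm
    exact (hn m j (by omega) (by omega)).symm
  have h2 := (pt_cont.tendsto t).comp h1
  obtain ⟨m, hm⟩ := ((Metric.tendsto_nhds.1 h2) ε hε).exists
  refine ⟨n m, ?_⟩
  rw [pt_shift_iter]
  exact hm

theorem periodic (m : ℕ) : ∃ p : ℝ × ℝ, ∃ k : ℕ, m ≤ k ∧ (Phi 0.99 5)^[k] p = p ∧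
        ∀ j : ℕ, 0 < j → j < k → (Phi 0.99 5)^[j] p ≠ p := by
  let s : ℤ → Bool := fun j => decide (((m + 1 : ℕ) : ℤ) ∣ j)
  have hs : shiftMap^[m + 1] s = s := by
    rw [shift_iter]
    funext j
    simp only [s]
    congr 1
    exact propext (dvd_add_self_right)
  have hper : Function.IsPeriodicPt (Phi 0.99 5) ((3 + 2) * (m + 1)) (pt s) := by
    have := pt_shift_iter s (m + 1)
    rw [hs, ← Function.iterate_mul] at this
    exact this
  have hpos : 0 < Function.minimalPeriod (Phi 0.99 5) (pt s) :=
    hper.minimalPeriod_pos (by positivity)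
  refine ⟨pt s, Function.minimalPeriod (Phi 0.99 5) (pt s), ?_,
    Function.iterate_minimalPeriod, fun j hj hlt =>
      Function.not_isPeriodicPt_of_pos_of_lt_minimalPeriod hj.ne' hlt⟩
  set k := Function.minimalPeriod (Phi 0.99 5) (pt s) with hk
  have h1 : ((Phi 0.99 5)^[3 + 2])^[k] (pt s) = pt s := by
    rw [← Function.iterate_mul, mul_comm, Function.iterate_mul]
    exact Function.iterate_fixed (Function.iterate_minimalPeriod) _
  rw [pt_shift_iter] at h1
  have h2 := congrFun (pt_inj h1) 0
  rw [shift_iter] at h2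
  simp only [s, zero_add, dvd_zero, decide_true, decide_eq_true_eq] at h2
  have := Nat.le_of_dvd hpos (Int.natCast_dvd_natCast.1 h2)
  omega

end Horse

/-- For Φ = Φ_{0.99,5}: there are N ∈ ℕ and a nonempty compact set Λ invariant under
H = Φ^(N+2), and a homeomorphism e : Λ ≃ {0,1}^ℤ conjugating H|_Λ to the shift map.
Consequently H|_Λ has a dense orbit and Φ has periodic points of arbitrarily large
minimal period. -/
theorem stmt_19 :
    ∃ (N : ℕ) (Λ : Set (ℝ × ℝ))
      (hmap : Set.MapsTo ((Phi 0.99 5)^[N + 2]) Λ Λ),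
      Λ.Nonempty ∧ IsCompact Λ ∧
      (Phi 0.99 5)^[N + 2] '' Λ = Λ ∧
      (∃ e : Λ ≃ₜ (ℤ → Bool),
        ∀ p : Λ, e ⟨(Phi 0.99 5)^[N + 2] p.1, hmap p.2⟩ = shiftMap (e p)) ∧
      (∃ p ∈ Λ, ∀ q ∈ Λ, ∀ ε > (0 : ℝ), ∃ n : ℕ,
        dist (((Phi 0.99 5)^[N + 2])^[n] p) q < ε) ∧
      (∀ m : ℕ, ∃ p : ℝ × ℝ, ∃ k : ℕ, m ≤ k ∧ (Phi 0.99 5)^[k] p = p ∧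
        ∀ j : ℕ, 0 < j → j < k → (Phi 0.99 5)^[j] p ≠ p) := by
  have hmap : Set.MapsTo ((Phi 0.99 5)^[3 + 2]) (Set.range Horse.pt) (Set.range Horse.pt) := by
    rintro _ ⟨s, rfl⟩
    exact ⟨shiftMap s, (Horse.pt_shift s).symm⟩
  refine ⟨3, Set.range Horse.pt, hmap, Set.range_nonempty _, isCompact_range Horse.pt_cont,
    ?_, ?_, ⟨Horse.pt Horse.uni, ⟨_, rfl⟩, ?_⟩, Horse.periodic⟩
  · apply Set.Subset.antisymm
    · rintro _ ⟨_, ⟨s, rfl⟩, rfl⟩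
      exact ⟨shiftMap s, (Horse.pt_shift s).symm⟩
    · rintro _ ⟨s, rfl⟩
      refine ⟨Horse.pt (fun n => s (n - 1)), ⟨_, rfl⟩, ?_⟩
      rw [Horse.pt_shift]
      congr 1
      funext n
      simp [shiftMap]
  · let E : (ℤ → Bool) ≃ Set.range Horse.pt := Equiv.ofInjective Horse.pt Horse.pt_inj
    have hE : Continuous E := Horse.pt_cont.subtype_mk _
    let Eh : (ℤ → Bool) ≃ₜ Set.range Horse.pt := hE.homeoOfEquivCompactToT2
    refine ⟨Eh.symm, ?_⟩
    rintro ⟨_, ⟨s, rfl⟩⟩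
    have h1 : (⟨Horse.pt s, ⟨s, rfl⟩⟩ : Set.range Horse.pt) = Eh s := rfl
    rw [h1, Eh.symm_apply_apply, Eh.symm_apply_eq]
    exact Subtype.ext (Horse.pt_shift s)
  · rintro _ ⟨t, rfl⟩ ε hε
    exact Horse.dense_orbit t ε hε
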